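/- Proposition 4 (asymptotic SOP, Eq. (21), stated as a rigorous limit): let f(·; ḡ, κ, μ, m) denote the κ-μ shadowed PDF, let f_B(·; g) = f(·; N_B·g, κ_B, N_B·μ_B, N_B·m_B) and f_E = f(·; N_E·ȳ_E, κ_E, N_E·μ_E, N_E·m_E), and set G(x; g) = (∫₀^x f_B(t; g) dt)^{N_A}. Then for every τ ≥ 1, lim_{g→∞} g^{N_A·N_B·μ_B}·∫₀^∞ G(τγ; g)·f_E(γ) dγ = [ τ^{N_B·μ_B}·m_B^{N_B·m_B}·(1+κ_B)^{N_B·μ_B}·μ_B^{N_B·μ_B−1} / ( N_B·(m_B+κ_B·μ_B)^{N_B·m_B}·(N_B·μ_B−1)! ) ]^{N_A}·( ȳ_E/(μ_E(1+κ_E)) )^{N_A·N_B·μ_B}·( m_E^{N_E·m_E}·(N_A·N_B·μ_B+N_E·μ_E−1)! / ( (N_E·μ_E−1)!·(μ_E·κ_E+m_E)^{N_E·m_E} ) )·₂F₁( N_E·m_E, N_A·N_B·μ_B+N_E·μ_E; N_E·μ_E; κ_E·μ_E/(m_E+κ_E·μ_E) ). -/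

import Mathlib

open MeasureTheory

/-- The confluent hypergeometric function `₁F₁(a; b; z)`. -/
noncomputable def oneF1 (a b z : ℝ) : ℝ :=
  ∑' n : ℕ, (ascPochhammer ℝ n).eval a * z ^ n /
    ((ascPochhammer ℝ n).eval b * (Nat.factorial n : ℝ))

/-- The Gauss hypergeometric function `₂F₁(a₁, a₂; b; z)`. -/
noncomputable def twoF1 (a₁ a₂ b z : ℝ) : ℝ :=
  ∑' n : ℕ, (ascPochhammer ℝ n).eval a₁ * (ascPochhammer ℝ n).eval a₂ * z ^ n /
    ((ascPochhammer ℝ n).eval b * (Nat.factorial n : ℝ))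

/-- The κ-μ shadowed PDF with average SNR `g`, LOS parameter `κ > 0` and positive integer
fading parameters `μ, m` (here `Γ(μ) = (μ−1)!`). -/
noncomputable def kmuPDF (g κ : ℝ) (μ m : ℕ) (x : ℝ) : ℝ :=
  ((μ : ℝ) ^ μ * (m : ℝ) ^ m * (1 + κ) ^ μ) /
      ((Nat.factorial (μ - 1) : ℝ) * g ^ μ * ((μ : ℝ) * κ + m) ^ m) *
    x ^ (μ - 1) * Real.exp (-((μ : ℝ) * (1 + κ) * x) / g) *
    oneF1 (m : ℝ) (μ : ℝ) ((μ : ℝ) ^ 2 * κ * (1 + κ) * x / (((μ : ℝ) * κ + m) * g))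

/-!
Write `M = N_B * μ_B`. The density with average SNR `g` is `g⁻¹` times a fixed profile evaluated at
`x / g`, and the profile is `x ^ (M - 1)` times a continuous bounded kernel `h` (bounded because the
growth rate of `₁F₁` is strictly below the decay rate of the exponential). Hence
`g ^ M * ∫₀ˣ f_B(t; g) dt` is, up to a constant, `x ^ M` times a weighted mean of `h` over
`[0, x / g]`, which is bounded and tends to `h 0 / M`. Dominated convergence leaves the moment of
order `N_A * M` of `f_E`, the Laplace transform of a power times `₁F₁`; integrating the series of
`₁F₁` termwise gives `₂F₁`.
-/

open Set Filter Topology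

section Hypergeometric

/-- The `n`-th term of the power series `oneF1 a b z`. -/
noncomputable def oneF1Term (a b z : ℝ) (n : ℕ) : ℝ :=
  (ascPochhammer ℝ n).eval a * z ^ n / ((ascPochhammer ℝ n).eval b * (n.factorial : ℝ))

/-- The `n`-th term of the power series `twoF1 a₁ a₂ b z`. -/
noncomputable def twoF1Term (a₁ a₂ b z : ℝ) (n : ℕ) : ℝ :=
  (ascPochhammer ℝ n).eval a₁ * (ascPochhammer ℝ n).eval a₂ * z ^ n /
    ((ascPochhammer ℝ n).eval b * (n.factorial : ℝ))

lemma oneF1Term_mul (a b z x : ℝ) (n : ℕ) :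
    oneF1Term a b (z * x) n = oneF1Term a b z n * x ^ n := by
  rw [oneF1Term, oneF1Term, mul_pow]
  ring

lemma one_le_radius_ordinaryHypergeometricSeries (a b c : ℝ) :
    1 ≤ (ordinaryHypergeometricSeries ℝ a b c).radius := by
  by_cases! h : ∀ k : ℕ, (k : ℝ) ≠ -a ∧ (k : ℝ) ≠ -b ∧ (k : ℝ) ≠ -c
  · exact (ordinaryHypergeometricSeries_radius_eq_one ℝ a b c h).ge
  · obtain ⟨k, hk⟩ := h
    refine le_top.trans_eq (FormalMultilinearSeries.radius_eq_top_of_forall_image_add_eq_zero _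
      (k + 1) fun n ↦ ordinaryHypergeometricSeries_eq_zero_of_neg_nat (k := k) a b c ?_ ?_).symm
    · tauto
    · omega

lemma summable_norm_twoF1Term (a₁ a₂ b : ℝ) {z : ℝ} (hz : |z| < 1) :
    Summable fun n ↦ ‖twoF1Term a₁ a₂ b z n‖ := by
  have hmem : z ∈ Metric.eball 0 (ordinaryHypergeometricSeries ℝ a₁ a₂ b).radius := by
    refine Metric.eball_subset_eball (one_le_radius_ordinaryHypergeometricSeries a₁ a₂ b) ?_
    simpa [mem_eball_zero_iff, enorm_eq_nnnorm, ← NNReal.coe_lt_coe] using hz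
  refine (FormalMultilinearSeries.summable_norm_apply _ hmem).congr fun n ↦ ?_
  rw [ordinaryHypergeometricSeries_apply_eq, twoF1Term, smul_eq_mul]
  congr 1
  field_simp

lemma exists_abs_oneF1Term_le (a b : ℝ) {r : ℝ} (hr : |r| < 1) :
    ∃ C, ∀ n, |oneF1Term a b r n| ≤ C * (1 / n.factorial) := by
  have hsum := summable_norm_twoF1Term a 1 b hr
  refine ⟨∑' n, ‖twoF1Term a 1 b r n‖, fun n ↦ ?_⟩
  have hterm : oneF1Term a b r n = twoF1Term a 1 b r n * (1 / n.factorial) := by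
    rw [oneF1Term, twoF1Term, ascPochhammer_eval_one]
    field_simp
  rw [hterm, abs_mul, abs_of_nonneg (by positivity : (0 : ℝ) ≤ 1 / n.factorial)]
  gcongr
  exact hsum.le_tsum n fun _ _ ↦ norm_nonneg _

-- Writing `w * u = (w / s) * (s * u)` compares the series termwise with that of `exp (s * u)`.
lemma exists_abs_oneF1Term_mul_le (a b : ℝ) {w s : ℝ} (hws : |w| < s) :
    ∃ C, ∀ n u, 0 ≤ u → |oneF1Term a b (w * u) n| ≤ C * ((s * u) ^ n / n.factorial) := by
  have hs : 0 < s := (abs_nonneg w).trans_lt hws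
  obtain ⟨C, hC⟩ := exists_abs_oneF1Term_le a b (r := w / s)
    (by rwa [abs_div, abs_of_pos hs, div_lt_one hs])
  refine ⟨C, fun n u hu ↦ ?_⟩
  calc |oneF1Term a b (w * u) n|
      = |oneF1Term a b (w / s) n| * (s * u) ^ n := by
        rw [show w * u = w / s * (s * u) by field_simp, oneF1Term_mul, abs_mul,
          abs_of_nonneg (by positivity : 0 ≤ (s * u) ^ n)]
    _ ≤ C * (1 / n.factorial) * (s * u) ^ n := by gcongr; exact hC n
    _ = C * ((s * u) ^ n / n.factorial) := by ring

lemma exists_abs_oneF1_mul_le_exp (a b : ℝ) {w s : ℝ} (hws : |w| < s) :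
    ∃ C, ∀ u, 0 ≤ u → |oneF1 a b (w * u)| ≤ C * Real.exp (s * u) := by
  obtain ⟨C, hC⟩ := exists_abs_oneF1Term_mul_le a b hws
  have hexp (x : ℝ) : HasSum (fun n : ℕ ↦ C * (x ^ n / n.factorial)) (C * Real.exp x) := by
    rw [Real.exp_eq_exp_ℝ]
    exact (NormedSpace.expSeries_div_hasSum_exp x).mul_left C
  exact ⟨C, fun u hu ↦ tsum_of_norm_bounded (f := oneF1Term a b (w * u)) (hexp (s * u))
    fun n ↦ hC n u hu⟩

lemma continuous_oneF1 (a b : ℝ) : Continuous (oneF1 a b) := by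
  let p := FormalMultilinearSeries.ofScalars ℝ (oneF1Term a b 1)
  have hp : p.radius = ⊤ := by
    refine p.radius_eq_top_of_summable_norm fun r ↦ ?_
    obtain ⟨C, hC⟩ := exists_abs_oneF1Term_mul_le a b (w := 1) (s := 2) (by norm_num)
    refine .of_nonneg_of_le (fun n ↦ by positivity) (fun n ↦ ?_)
      ((Real.summable_pow_div_factorial (2 * r)).mul_left C)
    rw [FormalMultilinearSeries.ofScalars_norm, Real.norm_eq_abs, ← abs_of_nonneg r.coe_nonneg,
      ← abs_pow, ← abs_mul, ← oneF1Term_mul, abs_of_nonneg r.coe_nonneg]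
    exact hC n r r.coe_nonneg
  have hsum : oneF1 a b = p.sum := by
    ext z
    refine tsum_congr fun n ↦ ?_
    rw [FormalMultilinearSeries.ofScalars_apply_eq, smul_eq_mul, ← oneF1Term_mul,
      one_mul, oneF1Term]
  have hcont := (p.hasFPowerSeriesOnBall (by simp [hp])).continuousOn
  rwa [hp, Metric.eball_top, continuousOn_univ, ← hsum] at hcont

lemma oneF1_zero (a b : ℝ) : oneF1 a b 0 = 1 := by
  rw [oneF1, tsum_eq_single 0 fun n hn ↦ by simp [hn]]
  simp

end Hypergeometric

section LaplaceTransform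

lemma Gamma_add_natCast {c : ℝ} (hc : 0 < c) (n : ℕ) :
    Real.Gamma (c + n) = (ascPochhammer ℝ n).eval c * Real.Gamma c := by
  induction n with
  | zero => simp
  | succ n ih =>
    rw [Nat.cast_succ, ← add_assoc, Real.Gamma_add_one (by positivity), ih,
      ascPochhammer_succ_eval]
    ring

lemma integrableOn_rpow_sub_one_mul_exp_neg_mul {c s : ℝ} (hc : 0 < c) (hs : 0 < s) :
    IntegrableOn (fun x ↦ x ^ (c - 1) * Real.exp (-(s * x))) (Ioi 0) := by
  simpa only [Real.rpow_one, neg_mul] using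
    integrableOn_rpow_mul_exp_neg_mul_rpow (by linarith : -1 < c - 1) one_pos hs

lemma rpow_mul_exp_mul_oneF1Term (a b c s z : ℝ) (n : ℕ) {x : ℝ} (hx : 0 < x) :
    x ^ (c - 1) * Real.exp (-(s * x)) * oneF1Term a b (z * x) n =
      oneF1Term a b z n * (x ^ (c + n - 1) * Real.exp (-(s * x))) := by
  rw [oneF1Term_mul, add_sub_right_comm, Real.rpow_add hx, Real.rpow_natCast]
  ring

lemma oneF1Term_mul_integral_rpow (a b z : ℝ) {c s : ℝ} (hc : 0 < c) (hs : 0 < s) (n : ℕ) :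
    oneF1Term a b z n * ∫ x in Ioi 0, x ^ (c + n - 1) * Real.exp (-(s * x)) =
      Real.Gamma c / s ^ c * twoF1Term a c b (z / s) n := by
  rw [Real.integral_rpow_mul_exp_neg_mul_Ioi (by positivity) hs, Gamma_add_natCast hc,
    one_div, Real.inv_rpow hs.le, Real.rpow_add hs, Real.rpow_natCast, oneF1Term, twoF1Term,
    div_pow]
  ring

theorem integral_rpow_mul_exp_mul_oneF1 (a b : ℝ) {c s z : ℝ} (hc : 0 < c) (hzs : |z| < s) :
    ∫ x in Ioi 0, x ^ (c - 1) * Real.exp (-(s * x)) * oneF1 a b (z * x) =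
      Real.Gamma c / s ^ c * twoF1 a c b (z / s) := by
  have hs : 0 < s := (abs_nonneg z).trans_lt hzs
  let F (n : ℕ) (x : ℝ) := x ^ (c - 1) * Real.exp (-(s * x)) * oneF1Term a b (z * x) n
  have hint (n : ℕ) : IntegrableOn (F n) (Ioi 0) :=
    IntegrableOn.congr_fun
      ((integrableOn_rpow_sub_one_mul_exp_neg_mul (by positivity) hs).const_mul _)
      (fun x hx ↦ (rpow_mul_exp_mul_oneF1Term a b c s z n hx).symm) measurableSet_Ioi
  have hvalue (n : ℕ) :
      ∫ x in Ioi 0, F n x = Real.Gamma c / s ^ c * twoF1Term a c b (z / s) n := by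
    rw [setIntegral_congr_fun measurableSet_Ioi fun x hx ↦
      rpow_mul_exp_mul_oneF1Term a b c s z n hx, integral_const_mul,
      oneF1Term_mul_integral_rpow a b z hc hs]
  have hnorm (n : ℕ) :
      ∫ x in Ioi 0, ‖F n x‖ = ‖Real.Gamma c / s ^ c * twoF1Term a c b (z / s) n‖ := by
    rw [← oneF1Term_mul_integral_rpow a b z hc hs, norm_mul,
      Real.norm_of_nonneg (setIntegral_nonneg measurableSet_Ioi fun x (hx : 0 < x) ↦ by positivity),
      ← integral_const_mul]
    refine setIntegral_congr_fun measurableSet_Ioi fun x (hx : 0 < x) ↦ ?_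
    simp only [F, rpow_mul_exp_mul_oneF1Term a b c s z n hx, norm_mul]
    rw [Real.norm_of_nonneg (Real.rpow_nonneg hx.le _), Real.norm_of_nonneg (Real.exp_nonneg _)]
  have hsum : Summable fun n ↦ ∫ x in Ioi 0, ‖F n x‖ := by
    simp only [hnorm, norm_mul]
    refine (summable_norm_twoF1Term a c b ?_).mul_left _
    rwa [abs_div, abs_of_pos hs, div_lt_one hs]
  calc ∫ x in Ioi 0, x ^ (c - 1) * Real.exp (-(s * x)) * oneF1 a b (z * x)
      = ∫ x in Ioi 0, ∑' n, F n x := by simp only [F, tsum_mul_left]; rfl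
    _ = ∑' n, ∫ x in Ioi 0, F n x := (integral_tsum_of_summable_integral_norm hint hsum).symm
    _ = Real.Gamma c / s ^ c * twoF1 a c b (z / s) := by simp only [hvalue, tsum_mul_left]; rfl

lemma integrableOn_rpow_mul_exp_mul_oneF1 (a b : ℝ) {c s z : ℝ} (hc : 0 < c) (hzs : |z| < s) :
    IntegrableOn (fun x ↦ x ^ (c - 1) * Real.exp (-(s * x)) * oneF1 a b (z * x)) (Ioi 0) := by
  obtain ⟨r, hzr, hrs⟩ := exists_between hzs
  obtain ⟨C, hC⟩ := exists_abs_oneF1_mul_le_exp a b hzr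
  have hmeas : Measurable fun x ↦ x ^ (c - 1) * Real.exp (-(s * x)) * oneF1 a b (z * x) := by
    have := (continuous_oneF1 a b).measurable
    fun_prop
  refine ((integrableOn_rpow_sub_one_mul_exp_neg_mul hc (sub_pos.2 hrs)).const_mul C).mono'
    hmeas.aestronglyMeasurable (ae_restrict_of_forall_mem measurableSet_Ioi fun x hx ↦ ?_)
  have hx : 0 < x := hx
  calc ‖x ^ (c - 1) * Real.exp (-(s * x)) * oneF1 a b (z * x)‖
      = x ^ (c - 1) * Real.exp (-(s * x)) * |oneF1 a b (z * x)| := by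
        rw [norm_mul, Real.norm_of_nonneg (by positivity), Real.norm_eq_abs]
    _ ≤ x ^ (c - 1) * Real.exp (-(s * x)) * (C * Real.exp (r * x)) := by
        gcongr
        exact hC x hx.le
    _ = C * (x ^ (c - 1) * Real.exp (-((s - r) * x))) := by
        rw [show -((s - r) * x) = -(s * x) + r * x by ring, Real.exp_add]
        ring

end LaplaceTransform

section OriginAsymptotics

/-- The weighted mean `∫₀¹ uᵖ h(x u) du`, which is `x⁻ᵖ⁻¹ ∫₀ˣ tᵖ h(t) dt` without the singularity
at `x = 0`. -/
noncomputable def originMean (p : ℕ) (h : ℝ → ℝ) (x : ℝ) : ℝ :=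
  ∫ u in (0 : ℝ)..1, u ^ p * h (x * u)

lemma integral_pow_mul_comp_div (p : ℕ) (h : ℝ → ℝ) (g x : ℝ) :
    ∫ t in (0 : ℝ)..x, t ^ p * h (t / g) = x ^ (p + 1) * originMean p h (x / g) := by
  have hsub := intervalIntegral.mul_integral_comp_mul_left (a := 0) (b := 1)
    (f := fun t ↦ t ^ p * h (t / g)) (c := x)
  rw [mul_zero, mul_one] at hsub
  rw [← hsub, originMean, pow_succ', mul_assoc, ← intervalIntegral.integral_const_mul (x ^ p)]
  simp only [mul_pow, mul_assoc, mul_div_right_comm]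

lemma originMean_zero (p : ℕ) (h : ℝ → ℝ) : originMean p h 0 = h 0 / (p + 1) := by
  simp only [originMean, zero_mul, intervalIntegral.integral_mul_const, integral_pow]
  simp [div_eq_inv_mul]

lemma continuous_originMean (p : ℕ) {h : ℝ → ℝ} (hh : Continuous h) :
    Continuous (originMean p h) :=
  intervalIntegral.continuous_parametric_intervalIntegral_of_continuous' (by fun_prop) 0 1

lemma abs_originMean_le (p : ℕ) {h : ℝ → ℝ} {C : ℝ} (hC : ∀ u, 0 ≤ u → |h u| ≤ C) {x : ℝ}
    (hx : 0 ≤ x) : |originMean p h x| ≤ C := by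
  have hbound : ∀ u ∈ uIoc (0 : ℝ) 1, ‖u ^ p * h (x * u)‖ ≤ C := fun u hu ↦ by
    obtain ⟨hu0, hu1⟩ := (uIoc_of_le (zero_le_one' ℝ)).subset hu
    rw [norm_mul, norm_pow, Real.norm_of_nonneg hu0.le]
    exact (mul_le_of_le_one_left (norm_nonneg _) (pow_le_one₀ hu0.le hu1)).trans
      (hC _ (by positivity))
  simpa [originMean] using intervalIntegral.norm_integral_le_of_norm_le_const hbound

lemma tendsto_integral_comp_div_mul {φ ψ : ℝ → ℝ} {c C : ℝ} (hφ : Measurable φ)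
    (hφ0 : Tendsto φ (𝓝[>] 0) (𝓝 c)) (hC : ∀ u, 0 < u → |φ u| ≤ C)
    (hψ : IntegrableOn ψ (Ioi 0)) :
    Tendsto (fun g ↦ ∫ x in Ioi 0, φ (x / g) * ψ x) atTop (𝓝 (c * ∫ x in Ioi 0, ψ x)) := by
  rw [← integral_const_mul]
  refine tendsto_integral_filter_of_dominated_convergence (fun x ↦ C * ‖ψ x‖) ?_ ?_
    (hψ.norm.const_mul C) ?_
  · exact .of_forall fun g ↦
      (hφ.comp (measurable_id.div_const g)).aestronglyMeasurable.mul hψ.aestronglyMeasurable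
  · filter_upwards [eventually_gt_atTop 0] with g hg
    refine ae_restrict_of_forall_mem measurableSet_Ioi fun x hx ↦ ?_
    rw [norm_mul]
    gcongr
    exact hC _ (div_pos hx hg)
  · refine ae_restrict_of_forall_mem measurableSet_Ioi fun x hx ↦ (hφ0.comp ?_).mul_const _
    refine tendsto_nhdsWithin_iff.2 ⟨tendsto_const_nhds.div_atTop tendsto_id, ?_⟩
    filter_upwards [eventually_gt_atTop 0] with g hg using div_pos hx hg

theorem tendsto_integral_primitive_pow_mul (n p : ℕ) {h ψ : ℝ → ℝ} {τ C : ℝ}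
    (hh : Continuous h) (hC : ∀ u, 0 ≤ u → |h u| ≤ C) (hτ : 0 ≤ τ)
    (hψ : IntegrableOn (fun x ↦ x ^ (n * (p + 1)) * ψ x) (Ioi 0)) :
    Tendsto (fun g ↦ ∫ x in Ioi 0, (∫ t in (0 : ℝ)..(τ * x), t ^ p * h (t / g)) ^ n * ψ x) atTop
      (𝓝 ((τ ^ (p + 1) * (h 0 / (p + 1))) ^ n * ∫ x in Ioi 0, x ^ (n * (p + 1)) * ψ x)) := by
  let φ (u : ℝ) := (τ ^ (p + 1) * originMean p h (τ * u)) ^ n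
  have hφ : Continuous φ := by
    have := continuous_originMean p hh
    fun_prop
  have hφ0 : φ 0 = (τ ^ (p + 1) * (h 0 / (p + 1))) ^ n := by
    simp only [φ, mul_zero, originMean_zero]
  have hφC (u : ℝ) (hu : 0 < u) : |φ u| ≤ (τ ^ (p + 1) * C) ^ n := by
    rw [abs_pow, abs_mul, abs_of_nonneg (by positivity : 0 ≤ τ ^ (p + 1))]
    gcongr
    exact abs_originMean_le p hC (by positivity)
  rw [← hφ0]
  refine (tendsto_integral_comp_div_mul hφ.measurable
    (hφ.tendsto 0 |>.mono_left nhdsWithin_le_nhds) hφC hψ).congr fun g ↦ ?_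
  congr 1 with x
  rw [integral_pow_mul_comp_div, mul_div_assoc, mul_pow τ]
  simp only [φ]
  ring

end OriginAsymptotics


section KappaMuShadowed

/-- The leading coefficient at the origin of the κ-μ shadowed density with unit average SNR:
`kmuPDF 1 κ μ m x ∼ kmuCoeff κ μ m * x ^ (μ - 1)` as `x → 0⁺`. -/
noncomputable def kmuCoeff (κ : ℝ) (μ m : ℕ) : ℝ :=
  (μ : ℝ) ^ μ * (m : ℝ) ^ m * (1 + κ) ^ μ / ((μ - 1).factorial * (μ * κ + m) ^ m)

/-- The factor of the κ-μ shadowed density with unit average SNR that multiplies its leading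
monomial at the origin, normalised to `1` there. -/
noncomputable def kmuKernel (κ : ℝ) (μ m : ℕ) (u : ℝ) : ℝ :=
  Real.exp (-(μ * (1 + κ) * u)) * oneF1 m μ (μ ^ 2 * κ * (1 + κ) / (μ * κ + m) * u)

lemma kmuPDF_eq (g κ : ℝ) (μ m : ℕ) (x : ℝ) :
    kmuPDF g κ μ m x = kmuCoeff κ μ m / g ^ μ * (x ^ (μ - 1) * kmuKernel κ μ m (x / g)) := by
  have hexp : -(μ * (1 + κ) * x) / g = -(μ * (1 + κ) * (x / g)) := by ring
  have harg : (μ : ℝ) ^ 2 * κ * (1 + κ) * x / ((μ * κ + m) * g) =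
      μ ^ 2 * κ * (1 + κ) / (μ * κ + m) * (x / g) := by
    rw [div_mul_div_comm]
  rw [kmuPDF, kmuCoeff, kmuKernel, hexp, harg]
  ring

lemma kmuKernel_zero (κ : ℝ) (μ m : ℕ) : kmuKernel κ μ m 0 = 1 := by
  simp [kmuKernel, oneF1_zero]

lemma continuous_kmuKernel (κ : ℝ) (μ m : ℕ) : Continuous (kmuKernel κ μ m) := by
  have := continuous_oneF1 m μ
  unfold kmuKernel
  fun_prop

variable {g κ : ℝ} {μ m : ℕ}

lemma abs_kmuKernel_rate_lt (hκ : 0 ≤ κ) (hμ : 0 < μ) (hm : 0 < m) :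
    |(μ : ℝ) ^ 2 * κ * (1 + κ) / (μ * κ + m)| < μ * (1 + κ) := by
  rw [abs_of_nonneg (by positivity), div_lt_iff₀ (by positivity)]
  have : 0 < (μ : ℝ) * (1 + κ) * m := by positivity
  linarith

lemma exists_abs_kmuKernel_le (hκ : 0 ≤ κ) (hμ : 0 < μ) (hm : 0 < m) :
    ∃ C, ∀ u, 0 ≤ u → |kmuKernel κ μ m u| ≤ C := by
  obtain ⟨C, hC⟩ := exists_abs_oneF1_mul_le_exp m μ (abs_kmuKernel_rate_lt hκ hμ hm)
  refine ⟨C, fun u hu ↦ ?_⟩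
  rw [kmuKernel, abs_mul, Real.abs_exp, Real.exp_neg, ← div_eq_inv_mul,
    div_le_iff₀ (Real.exp_pos _)]
  exact hC u hu

theorem tendsto_pow_mul_integral_kmuPDF_primitive_pow_mul (n : ℕ) {τ : ℝ} {f : ℝ → ℝ}
    (hκ : 0 ≤ κ) (hμ : 0 < μ) (hm : 0 < m) (hτ : 0 ≤ τ)
    (hf : IntegrableOn (fun x ↦ x ^ (n * μ) * f x) (Ioi 0)) :
    Tendsto
      (fun g ↦ g ^ (n * μ) *
        ∫ x in Ioi 0, (∫ t in (0 : ℝ)..(τ * x), kmuPDF g κ μ m t) ^ n * f x)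
      atTop (𝓝 ((kmuCoeff κ μ m * (τ ^ μ / μ)) ^ n * ∫ x in Ioi 0, x ^ (n * μ) * f x)) := by
  obtain ⟨C, hC⟩ := exists_abs_kmuKernel_le hκ hμ hm
  have hpred : μ - 1 + 1 = μ := Nat.sub_add_cancel hμ
  have hlim := (tendsto_integral_primitive_pow_mul n (μ - 1) (continuous_kmuKernel κ μ m) hC hτ
    (by rwa [hpred])).const_mul (kmuCoeff κ μ m ^ n)
  rw [kmuKernel_zero, ← Nat.cast_add_one, hpred, mul_one_div, ← mul_assoc, ← mul_pow] at hlim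
  refine hlim.congr' ?_
  filter_upwards [eventually_ne_atTop 0] with g hg
  simp only [kmuPDF_eq, intervalIntegral.integral_const_mul]
  rw [← integral_const_mul, ← integral_const_mul]
  congr 1 with x
  rw [mul_pow (_ / _), div_pow, ← pow_mul, mul_comm μ n]
  field_simp

variable (g κ m) in
lemma pow_mul_kmuPDF_eq (k : ℕ) (hμ : 0 < μ) (x : ℝ) :
    x ^ k * kmuPDF g κ μ m x = kmuCoeff κ μ m / g ^ μ *
      (x ^ ((k + μ : ℕ) - 1 : ℝ) * Real.exp (-(μ * (1 + κ) / g * x)) *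
        oneF1 m μ (μ ^ 2 * κ * (1 + κ) / (μ * κ + m) / g * x)) := by
  rw [← Nat.cast_pred (Nat.add_pos_right k hμ), Real.rpow_natCast, Nat.add_sub_assoc hμ, pow_add,
    kmuPDF_eq, kmuKernel, ← mul_div_assoc, mul_div_right_comm, ← mul_div_assoc,
    mul_div_right_comm _ x]
  ring

lemma abs_kmuKernel_rate_div_lt (hg : 0 < g) (hκ : 0 ≤ κ) (hμ : 0 < μ) (hm : 0 < m) :
    |(μ : ℝ) ^ 2 * κ * (1 + κ) / (μ * κ + m) / g| < μ * (1 + κ) / g := by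
  rw [abs_div, abs_of_pos hg]
  gcongr
  exact abs_kmuKernel_rate_lt hκ hμ hm

lemma integrableOn_pow_mul_kmuPDF (k : ℕ) (hg : 0 < g) (hκ : 0 ≤ κ) (hμ : 0 < μ) (hm : 0 < m) :
    IntegrableOn (fun x ↦ x ^ k * kmuPDF g κ μ m x) (Ioi 0) := by
  simp only [pow_mul_kmuPDF_eq g κ m k hμ]
  exact (integrableOn_rpow_mul_exp_mul_oneF1 m μ (by positivity)
    (abs_kmuKernel_rate_div_lt hg hκ hμ hm)).const_mul _

theorem integral_pow_mul_kmuPDF (k : ℕ) (hg : 0 < g) (hκ : 0 ≤ κ) (hμ : 0 < μ) (hm : 0 < m) :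
    ∫ x in Ioi 0, x ^ k * kmuPDF g κ μ m x =
      (g / (μ * (1 + κ))) ^ k *
        ((m : ℝ) ^ m * (k + μ - 1).factorial / ((μ - 1).factorial * (μ * κ + m) ^ m)) *
        twoF1 m (k + μ : ℕ) μ (μ * κ / (μ * κ + m)) := by
  have hratio : (μ : ℝ) ^ 2 * κ * (1 + κ) / (μ * κ + m) / g / (μ * (1 + κ) / g) =
      μ * κ / (μ * κ + m) := by
    field_simp
  have hGamma : Real.Gamma (k + μ : ℕ) = (k + μ - 1).factorial := by
    rw [← Real.Gamma_nat_eq_factorial, ← Nat.cast_add_one, Nat.sub_add_cancel (by omega)]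
  simp only [pow_mul_kmuPDF_eq g κ m k hμ]
  rw [integral_const_mul, integral_rpow_mul_exp_mul_oneF1 m μ (by positivity)
    (abs_kmuKernel_rate_div_lt hg hκ hμ hm), hratio, hGamma, Real.rpow_natCast, kmuCoeff,
    pow_add, div_pow, div_pow, div_pow, mul_pow _ (1 + κ) μ]
  field_simp

end KappaMuShadowed

section Aggregation

variable {κ : ℝ} {μ m N : ℕ}

variable (κ m) in
lemma kmuCoeff_mul_div_pow (τ : ℝ) (hμ : 0 < μ) (hN : 0 < N) :
    kmuCoeff κ (N * μ) (N * m) * (τ ^ (N * μ) / (N * μ : ℕ)) / (N : ℝ) ^ (N * μ) =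
      τ ^ (N * μ) * (m : ℝ) ^ (N * m) * (1 + κ) ^ (N * μ) * (μ : ℝ) ^ (N * μ - 1) /
        (N * (m + κ * μ) ^ (N * m) * (N * μ - 1).factorial) := by
  have hden : ((N * μ : ℕ) : ℝ) * κ + (N * m : ℕ) = N * (m + κ * μ) := by
    push_cast
    ring
  have hpow : (μ : ℝ) ^ (N * μ) = (μ : ℝ) ^ (N * μ - 1) * μ :=
    (pow_sub_one_mul (Nat.mul_pos hN hμ).ne' _).symm
  rw [kmuCoeff, hden, mul_pow (N : ℝ)]
  push_cast
  rw [mul_pow (N : ℝ) (μ : ℝ), mul_pow (N : ℝ) (m : ℝ), hpow]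
  field_simp

theorem tendsto_pow_mul_integral_kmuPDF_mul_primitive_pow_mul (n : ℕ) {τ : ℝ} {f : ℝ → ℝ}
    (hκ : 0 ≤ κ) (hμ : 0 < μ) (hm : 0 < m) (hN : 0 < N) (hτ : 0 ≤ τ)
    (hf : IntegrableOn (fun x ↦ x ^ (n * (N * μ)) * f x) (Ioi 0)) :
    Tendsto
      (fun g ↦ g ^ (n * (N * μ)) *
        ∫ x in Ioi 0, (∫ t in (0 : ℝ)..(τ * x), kmuPDF (N * g) κ (N * μ) (N * m) t) ^ n * f x)
      atTop
      (𝓝 ((τ ^ (N * μ) * (m : ℝ) ^ (N * m) * (1 + κ) ^ (N * μ) * (μ : ℝ) ^ (N * μ - 1) /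
        (N * (m + κ * μ) ^ (N * m) * (N * μ - 1).factorial)) ^ n *
          ∫ x in Ioi 0, x ^ (n * (N * μ)) * f x)) := by
  have hscaled : Tendsto (fun g : ℝ ↦ N * g) atTop atTop :=
    tendsto_id.const_mul_atTop (by positivity)
  have hlim := (((tendsto_pow_mul_integral_kmuPDF_primitive_pow_mul n hκ (Nat.mul_pos hN hμ)
    (Nat.mul_pos hN hm) hτ hf).comp hscaled).div_const (((N : ℝ) ^ (N * μ)) ^ n))
  rw [mul_div_right_comm, ← div_pow, kmuCoeff_mul_div_pow κ m τ hμ hN] at hlim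
  refine hlim.congr fun g ↦ ?_
  rw [Function.comp_apply, mul_pow (N : ℝ), ← pow_mul, mul_comm (N * μ) n, mul_assoc]
  exact mul_div_cancel_left₀ _ (by positivity)

lemma integral_pow_mul_kmuPDF_mul (k : ℕ) {y : ℝ} (hy : 0 < y) (hκ : 0 ≤ κ) (hμ : 0 < μ)
    (hm : 0 < m) (hN : 0 < N) :
    ∫ x in Ioi 0, x ^ k * kmuPDF (N * y) κ (N * μ) (N * m) x =
      (y / (μ * (1 + κ))) ^ k *
        ((m : ℝ) ^ (N * m) * (k + N * μ - 1).factorial /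
          ((N * μ - 1).factorial * (μ * κ + m) ^ (N * m))) *
        twoF1 (N * m) (k + N * μ) (N * μ) (κ * μ / (m + κ * μ)) := by
  have hden : ((N * μ : ℕ) : ℝ) * κ + (N * m : ℕ) = N * (μ * κ + m) := by
    push_cast
    ring
  have hscale : N * y / ((N * μ : ℕ) * (1 + κ)) = y / (μ * (1 + κ)) := by
    push_cast
    field_simp
  have harg : ((N * μ : ℕ) : ℝ) * κ / (N * (μ * κ + m)) = κ * μ / (m + κ * μ) := by
    push_cast
    field_simp
    ring
  have hcoeff : ((N * m : ℕ) : ℝ) ^ (N * m) * (k + N * μ - 1).factorial /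
      ((N * μ - 1).factorial * (N * (μ * κ + m)) ^ (N * m)) =
      (m : ℝ) ^ (N * m) * (k + N * μ - 1).factorial /
        ((N * μ - 1).factorial * (μ * κ + m) ^ (N * m)) := by
    push_cast
    rw [mul_pow, mul_pow]
    field_simp
  rw [integral_pow_mul_kmuPDF k (by positivity) hκ (by positivity) (by positivity), hden, hscale,
    harg, hcoeff]
  push_cast
  rfl

end Aggregation

theorem stmt16_general (κB yE κE : ℝ) (μB mB NB μE mE NE NA : ℕ) (τ : ℝ)
    (hκB : 0 ≤ κB) (hyE : 0 < yE) (hκE : 0 ≤ κE)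
    (hμB : 1 ≤ μB) (hmB : 1 ≤ mB) (hμE : 1 ≤ μE) (hmE : 1 ≤ mE)
    (hNB : 1 ≤ NB) (hNE : 1 ≤ NE) (hτ : 0 ≤ τ) :
    Tendsto
      (fun g : ℝ ↦ g ^ (NA * NB * μB) *
        ∫ γ in Ioi (0 : ℝ),
          (∫ t in (0 : ℝ)..(τ * γ), kmuPDF (NB * g) κB (NB * μB) (NB * mB) t) ^ NA *
            kmuPDF (NE * yE) κE (NE * μE) (NE * mE) γ)
      atTop
      (𝓝
        (((τ ^ (NB * μB) * (mB : ℝ) ^ (NB * mB) * (1 + κB) ^ (NB * μB) *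
              (μB : ℝ) ^ (NB * μB - 1)) /
            ((NB : ℝ) * ((mB : ℝ) + κB * μB) ^ (NB * mB) *
              (Nat.factorial (NB * μB - 1) : ℝ))) ^ NA *
          (yE / ((μE : ℝ) * (1 + κE))) ^ (NA * NB * μB) *
          ((mE : ℝ) ^ (NE * mE) *
              (Nat.factorial (NA * NB * μB + NE * μE - 1) : ℝ) /
            ((Nat.factorial (NE * μE - 1) : ℝ) *
              ((μE : ℝ) * κE + mE) ^ (NE * mE))) *
          twoF1 ((NE : ℝ) * mE) ((NA : ℝ) * NB * μB + (NE : ℝ) * μE) ((NE : ℝ) * μE)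
            (κE * μE / ((mE : ℝ) + κE * μE)))) := by
  have hmoment : IntegrableOn (fun γ ↦ γ ^ (NA * (NB * μB)) *
      kmuPDF (NE * yE) κE (NE * μE) (NE * mE) γ) (Ioi 0) :=
    integrableOn_pow_mul_kmuPDF _ (by positivity) hκE (by positivity) (by positivity)
  have hlim := tendsto_pow_mul_integral_kmuPDF_mul_primitive_pow_mul NA hκB hμB hmB hNB hτ hmoment
  rw [integral_pow_mul_kmuPDF_mul _ hyE hκE hμE hmE hNE, ← mul_assoc NA, ← mul_assoc, ← mul_assoc]
    at hlim
  exact mod_cast hlim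

/-- Proposition 4 (asymptotic SOP, Eq. (21)), as a rigorous limit: with
`f_B(·; g)` the Bob-side κ-μ shadowed PDF with parameters `(N_B g, κ_B, N_B μ_B, N_B m_B)`,
`f_E` the Eve-side PDF with parameters `(N_E ȳ_E, κ_E, N_E μ_E, N_E m_E)` and
`G(x; g) = (∫₀^x f_B(t; g) dt)^{N_A}`, the normalized secrecy outage probability
`g^{N_A N_B μ_B} ∫₀^∞ G(τγ; g) f_E(γ) dγ` converges, as `ḡ_B = g → ∞`, to the secrecy
array-gain constant of Eq. (21). -/
theorem stmt16 (κB yE κE : ℝ) (μB mB NB μE mE NE NA : ℕ) (τ : ℝ)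
    (hκB : 0 < κB) (hyE : 0 < yE) (hκE : 0 < κE)
    (hμB : 1 ≤ μB) (hmB : 1 ≤ mB) (hμE : 1 ≤ μE) (hmE : 1 ≤ mE)
    (hNB : 1 ≤ NB) (hNE : 1 ≤ NE) (hNA : 1 ≤ NA) (hτ : 1 ≤ τ) :
    Filter.Tendsto
      (fun g : ℝ => g ^ (NA * NB * μB) *
        ∫ γ in Set.Ioi (0 : ℝ),
          (∫ t in (0 : ℝ)..(τ * γ), kmuPDF (NB * g) κB (NB * μB) (NB * mB) t) ^ NA *
            kmuPDF (NE * yE) κE (NE * μE) (NE * mE) γ)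
      Filter.atTop
      (nhds
        (((τ ^ (NB * μB) * (mB : ℝ) ^ (NB * mB) * (1 + κB) ^ (NB * μB) *
              (μB : ℝ) ^ (NB * μB - 1)) /
            ((NB : ℝ) * ((mB : ℝ) + κB * μB) ^ (NB * mB) *
              (Nat.factorial (NB * μB - 1) : ℝ))) ^ NA *
          (yE / ((μE : ℝ) * (1 + κE))) ^ (NA * NB * μB) *
          ((mE : ℝ) ^ (NE * mE) *
              (Nat.factorial (NA * NB * μB + NE * μE - 1) : ℝ) /
            ((Nat.factorial (NE * μE - 1) : ℝ) *
              ((μE : ℝ) * κE + mE) ^ (NE * mE))) *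
          twoF1 ((NE : ℝ) * mE) ((NA : ℝ) * NB * μB + (NE : ℝ) * μE) ((NE : ℝ) * μE)
            (κE * μE / ((mE : ℝ) + κE * μE)))) :=
  stmt16_general κB yE κE μB mB NB μE mE NE NA τ hκB.le hyE hκE.le hμB hmB hμE hmE hNB hNE
    (zero_le_one.trans hτ)
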